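/- Existence of determinantal point processes on a countable set: let K : ℕ → ℕ → ℂ satisfy K j i = conj (K i j) for all i j (Hermitian), and suppose that for every finitely supported x : ℕ → ℂ one has 0 ≤ (∑ i, ∑ j, conj (x i) * K i j * x j).re and (∑ i, ∑ j, conj (x i) * K i j * x j).re ≤ ∑ i, ‖x i‖² (i.e. K defines a nonnegative contraction). Then there exists a probability measure μ on the space ℕ → Bool (with the product σ-algebra, each factor having the ⊤ σ-algebra on Bool) such that for every S : Finset ℕ, μ {f | ∀ i ∈ S, f i = true} (as a real number, coerced to ℂ) equals the determinant of the S.card × S.card matrix whose (a,b) entry is K (S.orderEmbOfFin rfl a) (S.orderEmbOfFin rfl b). -/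

import Mathlib

open scoped ComplexConjugate

/-- Determinant of the principal submatrix of `K : ℕ → ℕ → ℂ` on the finset `S`. -/
noncomputable def detMinorNat (K : ℕ → ℕ → ℂ) (S : Finset ℕ) : ℂ :=
  (Matrix.of fun a b : Fin S.card =>
    K (S.orderEmbOfFin rfl a) (S.orderEmbOfFin rfl b)).det

/-!
On a finite set, the process with kernel `M` must equal the configuration `g` with probability
`det N`, where row `i` of `N` is taken from `M` if `i` is occupied in `g` and from `1 - M` if it is
vacant. Up to a permutation of the indices, `N` has the block form `[A, B; -Bᴴ, D]` with `A` and `D`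
positive semidefinite, so a Schur complement shows `0 ≤ det N`. Since the two candidates for a row
add up to a row of the identity, multilinearity of the determinant shows that these laws are
compatible under restriction. They extend to an infinite index set because cylinders in a product
of finite sets are compact and open, which makes the finitely additive extension σ-additive.
-/

section

open Filter Function Matrix MeasureTheory Set Topology
open scoped ComplexOrder

section KolmogorovExtension

variable {ι : Type*} {X : ι → Type*} [∀ i, MeasurableSpace (X i)] [∀ i, Finite (X i)]
  {P : ∀ J : Finset ι, Measure (∀ j : J, X j)}

lemma isSigmaSubadditive_projectiveFamilyContent_of_finite (hP : IsProjectiveMeasureFamily P) :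
    (projectiveFamilyContent hP).IsSigmaSubadditive := by
  intro s hs hs_union
  let : ∀ i, TopologicalSpace (X i) := fun _ ↦ ⊥
  have : ∀ i, DiscreteTopology (X i) := fun _ ↦ ⟨rfl⟩
  have isClopen_of_mem {t : Set (∀ i, X i)} (ht : t ∈ measurableCylinders X) : IsClopen t := by
    obtain ⟨I, T, -, rfl⟩ := (mem_measurableCylinders t).1 ht
    exact (isClopen_discrete T).preimage (Finset.continuous_restrict I)
  obtain ⟨F, hF⟩ := (isClopen_of_mem hs_union).isClosed.isCompact.elim_finite_subcover s
    (fun n ↦ (isClopen_of_mem (hs n)).isOpen) subset_rfl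
  calc projectiveFamilyContent hP (⋃ n, s n)
      ≤ projectiveFamilyContent hP (⋃ n ∈ F, s n) := projectiveFamilyContent_mono hP hs_union
        (isSetRing_measurableCylinders.biUnion_mem F fun n _ ↦ hs n) hF
    _ ≤ ∑ n ∈ F, projectiveFamilyContent hP (s n) :=
        addContent_biUnion_le isSetRing_measurableCylinders fun n _ ↦ hs n
    _ ≤ ∑' n, projectiveFamilyContent hP (s n) := ENNReal.sum_le_tsum F

lemma exists_isProjectiveLimit_of_finite (hP : IsProjectiveMeasureFamily P) :
    ∃ μ : Measure (∀ i, X i), IsProjectiveLimit μ P := by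
  refine ⟨(projectiveFamilyContent hP).measure isSetSemiring_measurableCylinders
    generateFrom_measurableCylinders.ge
    (isSigmaSubadditive_projectiveFamilyContent_of_finite hP), fun I ↦ ?_⟩
  ext T hT
  rw [Measure.map_apply (Finset.measurable_restrict I) hT, ← cylinder,
    AddContent.measure_eq _ _ generateFrom_measurableCylinders.symm _
      (cylinder_mem_measurableCylinders I T hT)]
  exact projectiveFamilyContent_cylinder hP hT

end KolmogorovExtension

section ConfigurationMatrix

variable {ι κ R : Type*} [DecidableEq ι] [DecidableEq κ] [Ring R]

/-- For a kernel `M` on a finite set, the matrix whose determinant is the probability that the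
determinantal point process with kernel `M` equals the configuration `g`. -/
def configurationMatrix (M : Matrix ι ι R) (g : ι → Bool) : Matrix ι ι R :=
  of fun i ↦ if g i then M i else (1 - M) i

lemma configurationMatrix_const_true (M : Matrix ι ι R) :
    configurationMatrix M (fun _ ↦ true) = M := by
  ext i j
  simp [configurationMatrix]

lemma configurationMatrix_submatrix (M : Matrix ι ι R) (g : ι → Bool) {e : κ → ι}
    (he : Injective e) :
    configurationMatrix (M.submatrix e e) (g ∘ e) = (configurationMatrix M g).submatrix e e := by
  ext i j
  cases hi : g (e i) <;> simp [configurationMatrix, hi, one_apply, he.eq_iff]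

end ConfigurationMatrix

section Marginals

variable {ι κ R : Type*} [Fintype ι] [DecidableEq ι] [Fintype κ] [DecidableEq κ] [CommRing R]

lemma det_ite_one_row (N : Matrix ι ι R) (p : ι → Prop) [DecidablePred p] :
    det (of fun i ↦ if p i then N i else (1 : Matrix ι ι R) i) =
      (toSquareBlockProp N p).det := by
  rw [twoBlockTriangular_det _ p fun i hi j hj ↦ by
    simp [hi, one_apply_ne (ne_of_mem_of_not_mem (s := {i | p i}) hj hi).symm]]
  have upper_block : toSquareBlockProp
      (of fun i ↦ if p i then N i else (1 : Matrix ι ι R) i) p = toSquareBlockProp N p := by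
    ext i j
    simp [toSquareBlockProp_def, i.2]
  have lower_block : toSquareBlockProp
      (of fun i ↦ if p i then N i else (1 : Matrix ι ι R) i) (fun i ↦ ¬p i) = 1 := by
    ext i j
    simp [toSquareBlockProp_def, i.2, one_apply, Subtype.ext_iff]
  rw [upper_block, lower_block, det_one, mul_one]

lemma sum_det_configurationMatrix_of_eqOn (M : Matrix ι ι R) (g₀ : ι → Bool) (p : ι → Prop)
    [DecidablePred p] :
    ∑ g : ι → Bool with ∀ i, p i → g i = g₀ i, (configurationMatrix M g).det =
      (toSquareBlockProp (configurationMatrix M g₀) p).det := by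
  let choices (i : ι) : Finset Bool := if p i then {g₀ i} else Finset.univ
  have filter_eq : ({g : ι → Bool | ∀ i, p i → g i = g₀ i} : Finset (ι → Bool)) =
      Fintype.piFinset choices := by
    ext g
    simp only [Finset.mem_filter, Finset.mem_univ, true_and, Fintype.mem_piFinset, choices]
    refine forall_congr' fun i ↦ ?_
    split_ifs with hi <;> simp [hi]
  have row_sum (i : ι) : ∑ b ∈ choices i, (if b then M i else (1 - M) i) =
      if p i then configurationMatrix M g₀ i else (1 : Matrix ι ι R) i := by
    by_cases hi : p i
    · simp only [choices, hi, if_true, Finset.sum_singleton, configurationMatrix]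
      rfl
    · ext j
      simp [choices, hi]
  calc ∑ g : ι → Bool with ∀ i, p i → g i = g₀ i, (configurationMatrix M g).det
      = det (of fun i ↦ ∑ b ∈ choices i, if b then M i else (1 - M) i) := by
        rw [filter_eq]
        exact ((detRowAlternating (R := R) (n := ι)).toMultilinearMap.map_sum_finset
          (fun i b ↦ if b then M i else (1 - M) i) choices).symm
    _ = det (of fun i ↦ if p i then configurationMatrix M g₀ i else (1 : Matrix ι ι R) i) := by
        simp_rw [row_sum]
    _ = (toSquareBlockProp (configurationMatrix M g₀) p).det := det_ite_one_row _ p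

lemma sum_det_configurationMatrix_of_comp_eq (M : Matrix ι ι R) {e : κ → ι} (he : Injective e)
    (h : κ → Bool) :
    ∑ g : ι → Bool with g ∘ e = h, (configurationMatrix M g).det =
      (configurationMatrix (M.submatrix e e) h).det := by
  classical
  obtain ⟨g₀, rfl⟩ : ∃ g₀ : ι → Bool, g₀ ∘ e = h :=
    ⟨extend e h fun _ ↦ true, extend_comp he h _⟩
  have comp_eq_iff (g : ι → Bool) : g ∘ e = g₀ ∘ e ↔ ∀ i, (∃ k, e k = i) → g i = g₀ i := by
    simp [funext_iff]
  simp_rw [comp_eq_iff]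
  rw [sum_det_configurationMatrix_of_eqOn, configurationMatrix_submatrix M g₀ he]
  let equivRange : κ ≃ {i // ∃ k, e k = i} := Equiv.ofInjective e he
  exact (det_submatrix_equiv_self equivRange
    (toSquareBlockProp (configurationMatrix M g₀) fun i ↦ ∃ k, e k = i)).symm

end Marginals

section Nonneg

variable {ι m n 𝕜 : Type*} [Fintype ι] [DecidableEq ι] [Fintype m] [Fintype n] [DecidableEq m]
  [DecidableEq n] [RCLike 𝕜]

lemma det_fromBlocks_neg_conjTranspose_nonneg_of_posDef {A : Matrix m m 𝕜} (B : Matrix m n 𝕜)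
    {D : Matrix n n 𝕜} (hA : A.PosDef) (hD : D.PosSemidef) :
    0 ≤ (fromBlocks A B (-Bᴴ) D).det := by
  have : Invertible A := hA.isUnit.invertible
  have schur : (D - -Bᴴ * ⅟A * B).PosSemidef := by
    rw [invOf_eq_nonsing_inv, Matrix.neg_mul, Matrix.neg_mul, sub_neg_eq_add]
    exact hD.add (hA.inv.posSemidef.conjTranspose_mul_mul_same B)
  rw [det_fromBlocks₁₁]
  exact mul_nonneg hA.posSemidef.det_nonneg schur.det_nonneg

lemma det_fromBlocks_neg_conjTranspose_nonneg {A : Matrix m m 𝕜} (B : Matrix m n 𝕜)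
    {D : Matrix n n 𝕜} (hA : A.PosSemidef) (hD : D.PosSemidef) :
    0 ≤ (fromBlocks A B (-Bᴴ) D).det := by
  let f (ε : ℝ) : 𝕜 := (fromBlocks (A + (ε : 𝕜) • (1 : Matrix m m 𝕜)) B (-Bᴴ) D).det
  have f_nonneg (ε : ℝ) (hε : 0 < ε) : 0 ≤ f ε :=
    det_fromBlocks_neg_conjTranspose_nonneg_of_posDef B
      (.posSemidef_add hA (.smul .one (by exact_mod_cast hε))) hD
  have f_continuous : Continuous f :=
    (Continuous.matrix_fromBlocks (by fun_prop) (by fun_prop) (by fun_prop)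
      (by fun_prop)).matrix_det
  have f_tendsto : Tendsto f (𝓝[>] 0) (𝓝 (f 0)) := f_continuous.continuousWithinAt
  simpa [f] using ge_of_tendsto f_tendsto (eventually_nhdsWithin_of_forall f_nonneg)

lemma det_configurationMatrix_nonneg {M : Matrix ι ι 𝕜} (hM : M.PosSemidef)
    (hM' : (1 - M).PosSemidef) (g : ι → Bool) : 0 ≤ (configurationMatrix M g).det := by
  let p (i : ι) : Prop := g i = true
  rw [det_toBlock _ p]
  convert det_fromBlocks_neg_conjTranspose_nonneg (toBlock M p (¬p ·))
    (hM.submatrix ((↑) : {i // p i} → ι)) (hM'.submatrix ((↑) : {i // ¬p i} → ι)) using 3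
  · ext i j
    simp [configurationMatrix, show g i = true from i.2]
  · ext i j
    simp [configurationMatrix, show g i = true from i.2]
  · ext i j
    have hij : (i : ι) ≠ j := fun h ↦ i.2 (h ▸ j.2)
    simp [configurationMatrix, show ¬g i = true from i.2, one_apply_ne hij, ← hM.1.apply i j]
  · ext i j
    simp [configurationMatrix, show ¬g i = true from i.2]

end Nonneg

section FiniteLaw

variable {ι κ 𝕜 : Type*} [Fintype ι] [DecidableEq ι] [Fintype κ] [DecidableEq κ] [RCLike 𝕜]

/-- The law of the determinantal point process with kernel `M` on a finite set. Each weight is the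
determinant of a configuration matrix; taking real parts and truncating at `0` has no effect when
`M` and `1 - M` are positive semidefinite. -/
noncomputable def determinantalLaw (M : Matrix ι ι 𝕜) : Measure (ι → Bool) :=
  ∑ g, ENNReal.ofReal (RCLike.re (configurationMatrix M g).det) • Measure.dirac g

lemma determinantalLaw_apply (M : Matrix ι ι 𝕜) (s : Set (ι → Bool)) [DecidablePred (· ∈ s)] :
    determinantalLaw M s =
      ∑ g with g ∈ s, ENNReal.ofReal (RCLike.re (configurationMatrix M g).det) := by
  simp [determinantalLaw, Finset.sum_filter, Set.indicator_apply]

lemma determinantalLaw_singleton (M : Matrix ι ι 𝕜) (g : ι → Bool) :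
    determinantalLaw M {g} = ENNReal.ofReal (RCLike.re (configurationMatrix M g).det) := by
  simp [determinantalLaw_apply, Finset.filter_eq']

variable {M : Matrix ι ι 𝕜}

lemma map_comp_determinantalLaw (hM : M.PosSemidef) (hM' : (1 - M).PosSemidef) {e : κ → ι}
    (he : Injective e) :
    (determinantalLaw M).map (· ∘ e) = determinantalLaw (M.submatrix e e) := by
  refine Measure.ext_of_singleton fun h ↦ ?_
  have re_nonneg (g : ι → Bool) : 0 ≤ RCLike.re (configurationMatrix M g).det :=
    (RCLike.nonneg_iff.1 (det_configurationMatrix_nonneg hM hM' g)).1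
  calc (determinantalLaw M).map (· ∘ e) {h}
      = determinantalLaw M {g | g ∘ e = h} :=
        Measure.map_apply (measurable_of_finite _) (measurableSet_singleton h)
    _ = ∑ g with g ∘ e = h, ENNReal.ofReal (RCLike.re (configurationMatrix M g).det) :=
        determinantalLaw_apply M _
    _ = ENNReal.ofReal (RCLike.re (∑ g with g ∘ e = h, (configurationMatrix M g).det)) := by
        rw [map_sum, ENNReal.ofReal_sum_of_nonneg fun g _ ↦ re_nonneg g]
    _ = determinantalLaw (M.submatrix e e) {h} := by
        rw [sum_det_configurationMatrix_of_comp_eq M he, determinantalLaw_singleton]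

lemma isProbabilityMeasure_determinantalLaw (hM : M.PosSemidef) (hM' : (1 - M).PosSemidef) :
    IsProbabilityMeasure (determinantalLaw M) := by
  let e : Empty → ι := Empty.elim
  have : IsProbabilityMeasure ((determinantalLaw M).map (· ∘ e)) := by
    rw [map_comp_determinantalLaw hM hM' (injective_of_subsingleton e)]
    exact ⟨by simp [determinantalLaw_apply]⟩
  exact Measure.isProbabilityMeasure_of_map (· ∘ e)

end FiniteLaw

section QuadraticForm

variable {ι 𝕜 : Type*} [RCLike 𝕜] {M : Matrix ι ι 𝕜}

lemma conj_sum_sum_of_isHermitian (hM : M.IsHermitian) (x : ι →₀ 𝕜) :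
    conj (∑ i ∈ x.support, ∑ j ∈ x.support, conj (x i) * M i j * x j) =
      ∑ i ∈ x.support, ∑ j ∈ x.support, conj (x i) * M i j * x j := by
  simp_rw [map_sum, map_mul, RCLike.conj_conj]
  rw [Finset.sum_comm]
  refine Finset.sum_congr rfl fun i _ ↦ Finset.sum_congr rfl fun j _ ↦ ?_
  rw [show conj (M j i) = M i j from hM.apply i j]
  ring

lemma posSemidef_of_re_nonneg (hM : M.IsHermitian)
    (hpos : ∀ x : ι →₀ 𝕜,
      0 ≤ RCLike.re (∑ i ∈ x.support, ∑ j ∈ x.support, conj (x i) * M i j * x j)) :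
    M.PosSemidef :=
  ⟨hM, fun x ↦ RCLike.nonneg_iff.2
    ⟨hpos x, RCLike.conj_eq_iff_im.1 (conj_sum_sum_of_isHermitian hM x)⟩⟩

lemma posSemidef_one_sub_of_re_le [DecidableEq ι] (hM : M.IsHermitian)
    (hcon : ∀ x : ι →₀ 𝕜,
      RCLike.re (∑ i ∈ x.support, ∑ j ∈ x.support, conj (x i) * M i j * x j) ≤
        ∑ i ∈ x.support, ‖x i‖ ^ 2) : (1 - M).PosSemidef := by
  refine posSemidef_of_re_nonneg (isHermitian_one.sub hM) fun x ↦ ?_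
  have form_one : ∑ i ∈ x.support, ∑ j ∈ x.support, conj (x i) * (1 : Matrix ι ι 𝕜) i j * x j =
      ((∑ i ∈ x.support, ‖x i‖ ^ 2 : ℝ) : 𝕜) := by
    rw [RCLike.ofReal_sum]
    refine Finset.sum_congr rfl fun i hi ↦ ?_
    simp [one_apply, hi, RCLike.conj_mul]
  simp only [Matrix.sub_apply, mul_sub, sub_mul, Finset.sum_sub_distrib, form_one, map_sub,
    RCLike.ofReal_re]
  exact sub_nonneg.2 (hcon x)

end QuadraticForm

lemma detMinorNat_eq_det_submatrix (K : ℕ → ℕ → ℂ) (S : Finset ℕ) :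
    detMinorNat K S = ((of K).submatrix ((↑) : S → ℕ) (↑)).det :=
  det_submatrix_equiv_self (S.orderIsoOfFin rfl).toEquiv ((of K).submatrix ((↑) : S → ℕ) (↑))

section Existence

variable {ι 𝕜 : Type*} [DecidableEq ι] [RCLike 𝕜] {K : Matrix ι ι 𝕜}

lemma posSemidef_one_sub_submatrix {κ : Type*} [DecidableEq κ] (hK : (1 - K).PosSemidef)
    {e : κ → ι} (he : Injective e) : (1 - K.submatrix e e).PosSemidef := by
  rw [← submatrix_one e he]
  exact hK.submatrix e

lemma isProjectiveMeasureFamily_determinantalLaw (hK : K.PosSemidef) (hK' : (1 - K).PosSemidef) :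
    IsProjectiveMeasureFamily (α := fun _ : ι ↦ Bool)
      fun J : Finset ι ↦ determinantalLaw (K.submatrix ((↑) : J → ι) (↑)) := fun _ _ hJI ↦
  (map_comp_determinantalLaw (hK.submatrix _)
    (posSemidef_one_sub_submatrix hK' Subtype.val_injective)
    (Set.inclusion_injective (Finset.coe_subset.2 hJI))).symm

end Existence

theorem determinantal_exists_countable_general {ι 𝕜 : Type*} [DecidableEq ι] [RCLike 𝕜]
    {K : Matrix ι ι 𝕜} (hK : K.PosSemidef) (hK' : (1 - K).PosSemidef) :
    ∃ μ : Measure (ι → Bool), IsProbabilityMeasure μ ∧ ∀ S : Finset ι,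
      ((μ {f | ∀ i ∈ S, f i = true}).toReal : 𝕜) = (K.submatrix ((↑) : S → ι) (↑)).det := by
  obtain ⟨μ, hμ⟩ :=
    exists_isProjectiveLimit_of_finite (isProjectiveMeasureFamily_determinantalLaw hK hK')
  have (J : Finset ι) : IsProbabilityMeasure (determinantalLaw (K.submatrix ((↑) : J → ι) (↑))) :=
    isProbabilityMeasure_determinantalLaw (hK.submatrix _)
      (posSemidef_one_sub_submatrix hK' Subtype.val_injective)
  refine ⟨μ, hμ.isProbabilityMeasure, fun S ↦ ?_⟩
  have occupied_eq_cylinder :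
      {f : ι → Bool | ∀ i ∈ S, f i = true} = cylinder (α := fun _ ↦ Bool) S {fun _ ↦ true} := by
    ext f
    simp [funext_iff]
  have det_nonneg := RCLike.nonneg_iff.1 (hK.submatrix ((↑) : S → ι)).det_nonneg
  rw [occupied_eq_cylinder, hμ.measure_cylinder S (measurableSet_singleton _),
    determinantalLaw_singleton, configurationMatrix_const_true,
    ENNReal.toReal_ofReal det_nonneg.1]
  exact RCLike.conj_eq_iff_re.1 (RCLike.conj_eq_iff_im.2 det_nonneg.2)

end

theorem determinantal_exists_countable (K : ℕ → ℕ → ℂ)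
    (hherm : ∀ i j, K j i = conj (K i j))
    (hpos : ∀ x : ℕ →₀ ℂ,
      0 ≤ (∑ i ∈ x.support, ∑ j ∈ x.support, conj (x i) * K i j * x j).re)
    (hcon : ∀ x : ℕ →₀ ℂ,
      (∑ i ∈ x.support, ∑ j ∈ x.support, conj (x i) * K i j * x j).re ≤
        ∑ i ∈ x.support, ‖x i‖ ^ 2) :
    ∃ μ : MeasureTheory.Measure (ℕ → Bool), MeasureTheory.IsProbabilityMeasure μ ∧
      ∀ S : Finset ℕ,
        ((μ {f : ℕ → Bool | ∀ i ∈ S, f i = true}).toReal : ℂ) = detMinorNat K S := by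
  have hK : (Matrix.of K).IsHermitian := Matrix.IsHermitian.ext fun i j ↦ (hherm j i).symm
  obtain ⟨μ, hμ, hμ_det⟩ := determinantal_exists_countable_general
    (posSemidef_of_re_nonneg hK hpos) (posSemidef_one_sub_of_re_le hK hcon)
  exact ⟨μ, hμ, fun S ↦ (hμ_det S).trans (detMinorNat_eq_det_submatrix K S).symm⟩
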